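/- Let n ≥ 2 and let Π be a set, and suppose each x ∈ Π is assigned a finite set T(x) ⊆ {1,…,n} × {1,…,n} × ℝ with |T(x)| ≤ n². For each ρ ∈ ℝⁿ define the inconsistency function Δ_ρ : Π → ℝ by Δ_ρ(x) = Σ_{(i,j,w) ∈ T(x)} max{ρ_i − ρ_j − w, 0}. Then there is an absolute constant C > 0 such that any pairwise distinct x_1, …, x_N ∈ Π pseudo-shattered by the family Û = {Δ_ρ : ρ ∈ ℝⁿ} satisfy N ≤ C·n·log₂ n; that is, the pseudo-dimension of Û is O(n lg n). -/

import Mathlib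

open Classical in
/-- Sign patterns realised by a finite family of linear functionals. -/
noncomputable def signPatterns {ι V : Type*} [Fintype ι] [AddCommGroup V] [Module ℝ V]
    (L : ι → Module.Dual ℝ V) : Finset (Finset ι) :=
  Finset.univ.filter (fun s => ∃ y : V, ∀ i, i ∈ s ↔ 0 ≤ L i y)

open Classical in
theorem signPatterns_shatters_card {ι V : Type*} [Fintype ι] [AddCommGroup V] [Module ℝ V]
    [FiniteDimensional ℝ V] (L : ι → Module.Dual ℝ V) (S : Finset ι)
    (hS : (signPatterns L).Shatters S) : S.card ≤ Module.finrank ℝ V := by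
  by_contra hlt
  push Not at hlt
  have hli : ¬ LinearIndependent ℝ (fun i : S => L i) := by
    intro h
    have := h.fintype_card_le_finrank
    rw [Subspace.dual_finrank_eq] at this
    simp at this
    omega
  have key : ∀ g : S → ℝ, ∑ i, g i • L i = 0 → ∀ i, ¬ g i < 0 := by
    intro g hg i0 hi0
    obtain ⟨u, hu, hut⟩ := hS (t := S.filter (fun i => ∃ h : i ∈ S, 0 ≤ g ⟨i, h⟩))
      (Finset.filter_subset _ _)
    simp only [signPatterns, Finset.mem_filter, Finset.mem_univ, true_and] at hu
    obtain ⟨y, hy⟩ := hu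
    have hpat : ∀ i : S, 0 ≤ g i ↔ 0 ≤ L i y := by
      intro i
      rw [← hy]
      have := congrArg (fun s => (i : ι) ∈ s) hut
      simpa using this.symm
    have h0 : ∑ i, g i * L i y = 0 := by
      have := congrArg (fun f => f y) hg
      simpa [LinearMap.sum_apply] using this
    have hpos : 0 < ∑ i, g i * L i y := by
      apply Finset.sum_pos'
      · intro i _
        by_cases h : 0 ≤ g i
        · exact mul_nonneg h ((hpat i).1 h)
        · have h2 : ¬ 0 ≤ L i y := fun h' => h ((hpat i).2 h')
          push Not at h h2
          exact (mul_pos_of_neg_of_neg h h2).le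
      · refine ⟨i0, Finset.mem_univ _, ?_⟩
        have h2 : ¬ 0 ≤ L i0 y := fun h' => absurd ((hpat i0).2 h') (not_le.2 hi0)
        push Not at h2
        exact mul_pos_of_neg_of_neg hi0 h2
    linarith
  rw [Fintype.not_linearIndependent_iff] at hli
  obtain ⟨g, hg, i, hi⟩ := hli
  rcases lt_or_gt_of_ne hi with h | h
  · exact key g hg i h
  · refine key (fun i => - g i) ?_ i (by simpa using h)
    ext y
    have h0 : ∑ i, g i * L i y = 0 := by
      have := congrArg (fun f => f y) hg
      simpa [LinearMap.sum_apply] using this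
    rw [LinearMap.sum_apply]
    simp only [LinearMap.smul_apply, smul_eq_mul, neg_mul, Finset.sum_neg_distrib, h0, neg_zero,
      LinearMap.zero_apply]

theorem sum_choose_le_pow (m d : ℕ) : ∑ k ∈ Finset.Iic d, m.choose k ≤ (m + 1) ^ d := by
  rw [add_pow]
  have : Finset.Iic d = Finset.range (d + 1) := by ext; simp
  rw [this]
  apply Finset.sum_le_sum
  intro k hk
  simp only [one_pow, mul_one]
  have hk' : 0 < d.choose k := Nat.choose_pos (by simp at hk; omega)
  exact (Nat.choose_le_pow m k).trans (Nat.le_mul_of_pos_right _ hk')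

theorem signPatterns_card_le {ι V : Type*} [Fintype ι] [AddCommGroup V] [Module ℝ V]
    [FiniteDimensional ℝ V] (L : ι → Module.Dual ℝ V) :
    (signPatterns L).card ≤ (Fintype.card ι + 1) ^ Module.finrank ℝ V := by
  classical
  have hvc : (signPatterns L).vcDim ≤ Module.finrank ℝ V := by
    apply Finset.sup_le
    intro S hS
    rw [Finset.mem_shatterer] at hS
    apply signPatterns_shatters_card L S
    convert hS
  calc (signPatterns L).card ≤ (signPatterns L).shatterer.card := Finset.card_le_card_shatterer _
    _ ≤ ∑ k ∈ Finset.Iic (signPatterns L).vcDim, (Fintype.card ι).choose k :=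
        Finset.card_shatterer_le_sum_vcDim
    _ ≤ (Fintype.card ι + 1) ^ (signPatterns L).vcDim := sum_choose_le_pow _ _
    _ ≤ _ := Nat.pow_le_pow_right (by omega) hvc

/-- The linear functional `(ρ, s) ↦ ρ_i - ρ_j - w s`. -/
noncomputable def edgeFun {n : ℕ} (t : Fin n × Fin n × ℝ) :
    Module.Dual ℝ ((Fin n → ℝ) × ℝ) :=
  (LinearMap.proj t.1 ∘ₗ LinearMap.fst ℝ (Fin n → ℝ) ℝ)
    - (LinearMap.proj t.2.1 ∘ₗ LinearMap.fst ℝ (Fin n → ℝ) ℝ)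
    - t.2.2 • LinearMap.snd ℝ (Fin n → ℝ) ℝ

theorem edgeFun_apply {n : ℕ} (t : Fin n × Fin n × ℝ) (ρ : Fin n → ℝ) :
    edgeFun t (ρ, 1) = ρ t.1 - ρ t.2.1 - t.2.2 := by
  simp [edgeFun]

theorem two_pow_le {n N : ℕ} (T : Fin N → Finset (Fin n × Fin n × ℝ))
    (hT : ∀ i, (T i).card ≤ n ^ 2) (z : Fin N → ℝ)
    (h : ∀ b : Fin N → Bool, ∃ ρ : Fin n → ℝ, ∀ i : Fin N,
      (z i ≤ ∑ t ∈ T i, max (ρ t.1 - ρ t.2.1 - t.2.2) 0 ↔ b i = true)) :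
    2 ^ N ≤ (N * n ^ 2 + 1) ^ (n + 1) * (N + 1) ^ (n + 1) := by
  classical
  have hfr : Module.finrank ℝ ((Fin n → ℝ) × ℝ) = n + 1 := by simp
  let L : (Σ i : Fin N, T i) → Module.Dual ℝ ((Fin n → ℝ) × ℝ) := fun p => edgeFun p.2.1
  let M : Finset (Σ i : Fin N, T i) → Fin N → Module.Dual ℝ ((Fin n → ℝ) × ℝ) := fun σ i =>
    (∑ t : T i, if (⟨i, t⟩ : Σ i : Fin N, T i) ∈ σ then edgeFun t.1 else 0)
      - z i • LinearMap.snd ℝ (Fin n → ℝ) ℝ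
  have hsub : (Finset.univ : Finset (Finset (Fin N))) ⊆
      (signPatterns L).biUnion (fun σ => signPatterns (M σ)) := by
    intro s _
    obtain ⟨ρ, hρ⟩ := h (fun i => decide (i ∈ s))
    rw [Finset.mem_biUnion]
    refine ⟨Finset.univ.filter (fun p => 0 ≤ L p (ρ, 1)), ?_, ?_⟩
    · simp only [signPatterns, Finset.mem_filter, Finset.mem_univ, true_and]
      exact ⟨(ρ, 1), fun _ => Iff.rfl⟩
    · simp only [signPatterns, Finset.mem_filter, Finset.mem_univ, true_and]
      refine ⟨(ρ, 1), fun i => ?_⟩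
      have h1 := hρ i
      rw [decide_eq_true_iff] at h1
      rw [← h1, ← Finset.sum_coe_sort]
      simp only [M, L, Finset.mem_filter, Finset.mem_univ, true_and, LinearMap.sub_apply,
        LinearMap.sum_apply, LinearMap.smul_apply, LinearMap.snd_apply, smul_eq_mul, mul_one,
        sub_nonneg]
      have : ∀ t : T i, (if 0 ≤ edgeFun t.1 (ρ, 1) then edgeFun t.1 else 0 :
          Module.Dual ℝ ((Fin n → ℝ) × ℝ)) (ρ, 1)
          = max (ρ t.1.1 - ρ t.1.2.1 - t.1.2.2) 0 := by
        intro t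
        split_ifs with h
        · rw [edgeFun_apply] at *
          exact (max_eq_left h).symm
        · rw [edgeFun_apply] at h
          simp only [LinearMap.zero_apply]
          exact (max_eq_right (not_le.1 h).le).symm
      simp only [this]
  have hc1 : Fintype.card (Σ i : Fin N, T i) ≤ N * n ^ 2 := by
    rw [Fintype.card_sigma]
    calc _ ≤ ∑ i : Fin N, n ^ 2 := Finset.sum_le_sum (fun i _ => by simpa using hT i)
      _ = _ := by simp
  calc 2 ^ N = (Finset.univ : Finset (Finset (Fin N))).card := by simp
    _ ≤ _ := Finset.card_le_card hsub
    _ ≤ (signPatterns L).card * (N + 1) ^ (n + 1) := by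
        apply Finset.card_biUnion_le_card_mul
        intro σ _
        have := signPatterns_card_le (M σ)
        rwa [hfr, Fintype.card_fin] at this
    _ ≤ _ := by
        gcongr
        have := signPatterns_card_le L
        rw [hfr] at this
        exact this.trans (Nat.pow_le_pow_left (by omega) _)

theorem final_bound {n N : ℕ} (hn : 2 ≤ n)
    (h : 2 ^ N ≤ (N * n ^ 2 + 1) ^ (n + 1) * (N + 1) ^ (n + 1)) :
    (N : ℝ) ≤ 42 * n * Real.logb 2 n := by
  have hn' : (2 : ℝ) ≤ n := by exact_mod_cast hn
  have hlog1 : 1 ≤ Real.logb 2 n := by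
    rw [Real.le_logb_iff_rpow_le (by norm_num) (by linarith)]
    simpa using hn'
  rcases Nat.eq_zero_or_pos N with h0 | hN
  · subst h0
    simp only [Nat.cast_zero]
    positivity
  have hN' : (1 : ℝ) ≤ N := by exact_mod_cast hN
  have h1 : 2 ^ N ≤ (2 * N * n) ^ (3 * n) := by
    calc 2 ^ N ≤ _ := h
      _ = ((N * n ^ 2 + 1) * (N + 1)) ^ (n + 1) := by rw [mul_pow]
      _ ≤ ((2 * N * n) ^ 2) ^ (n + 1) := by
          apply Nat.pow_le_pow_left
          have : 1 ≤ N * n ^ 2 := Nat.mul_pos hN (by positivity)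
          calc (N * n ^ 2 + 1) * (N + 1) ≤ (N * n ^ 2 + N * n ^ 2) * (N + N) := by gcongr; omega
            _ = _ := by ring
      _ = (2 * N * n) ^ (2 * (n + 1)) := by rw [pow_mul]
      _ ≤ _ := Nat.pow_le_pow_right (by positivity) (by omega)
  have h2 : (2 : ℝ) ^ N ≤ (2 * N * n : ℝ) ^ (3 * n) := by exact_mod_cast h1
  have h3 := Real.logb_le_logb_of_le (b := 2) (by norm_num) (by positivity) h2
  rw [Real.logb_pow, Real.logb_pow, Real.logb_self_eq_one (by norm_num),
    Real.logb_mul (by positivity) (by positivity), Real.logb_mul (by positivity) (by positivity),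
    Real.logb_self_eq_one (by norm_num)] at h3
  have hy : ∀ y : ℝ, 0 < y → Real.logb 2 y ≤ 2 * y := by
    intro y hy
    rw [Real.logb, div_le_iff₀ (Real.log_pos (by norm_num))]
    have := Real.log_le_sub_one_of_pos hy
    have := Real.log_two_gt_d9
    nlinarith
  have h4 : Real.logb 2 N = Real.logb 2 (N / (12 * n)) + (Real.logb 2 12 + Real.logb 2 n) := by
    rw [← Real.logb_mul (by norm_num) (by positivity), ← Real.logb_mul (by positivity)
      (by positivity)]
    congr 1
    field_simp
  have h5 := hy (N / (12 * n)) (by positivity)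
  have h6 : Real.logb 2 12 ≤ 4 := by
    rw [Real.logb_le_iff_le_rpow (by norm_num) (by norm_num)]
    norm_num
  have h7 : (3 * n : ℝ) * (2 * (N / (12 * n))) = N / 2 := by
    field_simp
    norm_num
  push_cast at h3
  have h8 : (3 * n : ℝ) * (1 + Real.logb 2 N + Real.logb 2 n)
      ≤ 3 * n * (2 * (N / (12 * n)) + 7 * Real.logb 2 n) := by
    apply mul_le_mul_of_nonneg_left _ (by positivity)
    linarith
  rw [mul_add (3 * n : ℝ) (2 * (N / (12 * n))), h7] at h8
  linarith


/-- there is an absolute constant `C > 0` such that for the class of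
inconsistency functions `Δ_ρ(x) = Σ_{(i,j,w) ∈ T(x)} max{ρ_i − ρ_j − w, 0}` (where
`|T(x)| ≤ n²`), any pairwise-distinct pseudo-shattered set of size `N` satisfies
`N ≤ C·n·log₂ n`, i.e. the pseudo-dimension is `O(n lg n)`. -/
theorem stmt_10 :
    ∃ C : ℝ, 0 < C ∧
      ∀ (n : ℕ), 2 ≤ n →
      ∀ (P : Type) (T : P → Finset (Fin n × Fin n × ℝ)),
        (∀ x : P, (T x).card ≤ n ^ 2) →
      ∀ (N : ℕ) (x : Fin N → P), Function.Injective x →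
        (∃ z : Fin N → ℝ, ∀ b : Fin N → Bool, ∃ ρ : Fin n → ℝ,
          ∀ i : Fin N,
            (z i ≤ ∑ t ∈ T (x i), max (ρ t.1 - ρ t.2.1 - t.2.2) 0 ↔ b i = true)) →
      (N : ℝ) ≤ C * n * Real.logb 2 n := by
  refine ⟨42, by norm_num, ?_⟩
  intro n hn P T hT N x _ ⟨z, hz⟩
  exact final_bound hn (two_pow_le (fun i => T (x i)) (fun i => hT (x i)) z hz)
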